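/- Let P, Q ⊆ ℝ^d be polytopes. Then the union of those faces of P that are disjoint from Q is a strong deformation retract of P \ Q; in particular these two sets are homotopy equivalent. -/

import Mathlib

/-- `A` is a strong deformation retract of `B`. -/
def IsStrongDeformationRetract {E : Type*} [TopologicalSpace E] (A B : Set E) : Prop :=
  A ⊆ B ∧ ∃ H : C(↥B × ↥unitInterval, ↥B),
    (∀ b : B, H (b, 0) = b) ∧
    (∀ b : B, (b : E) ∈ A → ∀ t, H (b, t) = b) ∧
    (∀ b : B, ((H (b, 1) : E) ∈ A))

/-- A polytope is the convex hull of a finite set of points. -/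
def IsPolytope {E : Type*} [AddCommGroup E] [Module ℝ E] (P : Set E) : Prop :=
  ∃ S : Finset E, P = convexHull ℝ (S : Set E)

/-- Transitivity of strong deformation retracts. -/
lemma sdr_trans {E : Type*} [TopologicalSpace E] {A B C : Set E}
    (h1 : IsStrongDeformationRetract A B) (h2 : IsStrongDeformationRetract B C) :
    IsStrongDeformationRetract A C := by
  obtain ⟨hAB, H1, h10, h1A, h11⟩ := h1
  obtain ⟨hBC, H2, h20, h2B, h21⟩ := h2
  refine ⟨hAB.trans hBC, ?_⟩
  let r2 : C(C, B) := ⟨fun c => ⟨H2 (c, 1), h21 c⟩, by fun_prop⟩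
  let i : C(B, C) := ⟨Set.inclusion hBC, continuous_inclusion hBC⟩
  let K2 : ContinuousMap.Homotopy (ContinuousMap.id C) (i.comp r2) :=
    { toFun := fun p => H2 (p.2, p.1)
      continuous_toFun := by fun_prop
      map_zero_left := fun c => h20 c
      map_one_left := fun c => rfl }
  let r1 : C(B, B) := ⟨fun c => H1 (c, 1), by fun_prop⟩
  let K1 : ContinuousMap.Homotopy (i.comp r2) (i.comp (r1.comp r2)) :=
    { toFun := fun p => i (H1 (r2 p.2, p.1))
      continuous_toFun := by fun_prop
      map_zero_left := fun c => by simp [h10]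
      map_one_left := fun c => rfl }
  have e2 : ∀ t (c : C), (c : E) ∈ A → K2 (t, c) = c := fun t c hc => h2B c (hAB hc) t
  have er2 : ∀ (c : C), (c : E) ∈ A → (r2 c : E) = c := fun c hc =>
    congrArg Subtype.val (h2B c (hAB hc) 1)
  have e1 : ∀ t (c : C), (c : E) ∈ A → K1 (t, c) = c := by
    intro t c hc
    have h : (r2 c : E) ∈ A := by rw [er2 c hc]; exact hc
    have h3 := h1A (r2 c) h t
    apply Subtype.ext
    change ((H1 (r2 c, t) : B) : E) = c
    rw [h3, er2 c hc]
  let K := K2.trans K1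
  refine ⟨⟨fun p => K (p.2, p.1), by fun_prop⟩, ?_, ?_, ?_⟩
  · intro c
    change K (0, c) = c
    simp
  · intro c hc t
    change K (t, c) = c
    simp only [K]
    rw [ContinuousMap.Homotopy.trans_apply]
    split_ifs
    · exact e2 _ c hc
    · exact e1 _ c hc
  · intro c
    change ((K (1, c) : C) : E) ∈ A
    rw [ContinuousMap.Homotopy.apply_one]
    exact h11 (r2 c)

lemma sdr_refl {E : Type*} [TopologicalSpace E] (A : Set E) :
    IsStrongDeformationRetract A A :=
  ⟨subset_rfl, ⟨fun p => p.1, by fun_prop⟩, fun _ => rfl, fun _ _ _ => rfl, fun b => b.2⟩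

/-- Finitely generated cones are cut out by finitely many linear inequalities. -/
lemma cone_hrep {V ι : Type*} [AddCommGroup V] [Module ℝ V] [FiniteDimensional ℝ V]
    (v : ι → V) (S : Finset ι) :
    ∃ L : Finset (Module.Dual ℝ V), ∀ x,
      (∃ w : ι → ℝ, (∀ s ∈ S, 0 ≤ w s) ∧ ∑ s ∈ S, w s • v s = x) ↔ ∀ f ∈ L, 0 ≤ f x := by
  classical
  induction S using Finset.induction_on with
  | empty =>
    let B := Module.finBasis ℝ V
    refine ⟨(Finset.univ.image fun i => B.coord i) ∪ Finset.univ.image fun i => - B.coord i, ?_⟩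
    intro x
    constructor
    · rintro ⟨w, -, rfl⟩
      simp
    · intro h
      refine ⟨0, by simp, ?_⟩
      simp only [Finset.sum_empty]
      refine (B.forall_coord_eq_zero_iff.1 fun i => ?_).symm
      have h1 := h (B.coord i) (by simp)
      have h2 := h (- B.coord i) (by simp)
      simp only [LinearMap.neg_apply] at h2
      linarith
  | insert a S ha ih =>
    obtain ⟨L, hL⟩ := ih
    refine ⟨(L.filter fun f => 0 ≤ f (v a)) ∪
      ((L.filter fun f => 0 < f (v a)) ×ˢ (L.filter fun f => f (v a) < 0)).image
        (fun p => p.1 (v a) • p.2 - p.2 (v a) • p.1), ?_⟩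
    intro x
    have key : (∃ w : ι → ℝ, (∀ s ∈ insert a S, 0 ≤ w s) ∧ ∑ s ∈ insert a S, w s • v s = x) ↔
        ∃ t : ℝ, 0 ≤ t ∧ ∀ f ∈ L, t * f (v a) ≤ f x := by
      constructor
      · rintro ⟨w, hw, hx⟩
        refine ⟨w a, hw a (by simp), ?_⟩
        have := (hL (x - w a • v a)).1 ⟨w, fun s hs => hw s (by simp [hs]), by
          rw [← hx, Finset.sum_insert ha]; abel⟩
        intro f hf
        have h := this f hf
        simp only [map_sub, map_smul, smul_eq_mul] at h
        linarith
      · rintro ⟨t, ht, h⟩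
        obtain ⟨w, hw, hx⟩ := (hL (x - t • v a)).2 (fun f hf => by
          have := h f hf
          simp only [map_sub, map_smul, smul_eq_mul]
          linarith)
        refine ⟨Function.update w a t, ?_, ?_⟩
        · intro s hs
          by_cases hsa : s = a
          · subst hsa; simpa
          · simp only [Finset.mem_insert, hsa, false_or] at hs
            simpa [hsa] using hw s hs
        · rw [Finset.sum_insert ha, Function.update_self]
          have : ∑ s ∈ S, Function.update w a t s • v s = ∑ s ∈ S, w s • v s := by
            refine Finset.sum_congr rfl fun s hs => ?_
            rw [Function.update_of_ne]
            rintro rfl; exact ha hs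
          rw [this, hx]; abel
    rw [key]
    constructor
    · rintro ⟨t, ht, h⟩ f hf
      simp only [Finset.mem_union, Finset.mem_filter, Finset.mem_image, Finset.mem_product,
        Prod.exists] at hf
      rcases hf with ⟨hf, hv⟩ | ⟨f1, g1, ⟨⟨hf1, h1⟩, hg1, h2⟩, rfl⟩
      · exact le_trans (mul_nonneg ht hv) (h f hf)
      · have a1 := h f1 hf1
        have a2 := h g1 hg1
        simp only [LinearMap.sub_apply, LinearMap.smul_apply, smul_eq_mul]
        nlinarith
    · intro h
      let T : Finset ℝ := insert 0 ((L.filter fun f => f (v a) < 0).image fun g => g x / g (v a))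
      have hT : T.Nonempty := Finset.insert_nonempty _ _
      refine ⟨T.max' hT, Finset.le_max' _ _ (by simp [T]), ?_⟩
      intro f hf
      rcases lt_trichotomy (f (v a)) 0 with hv | hv | hv
      · have : f x / f (v a) ≤ T.max' hT := Finset.le_max' _ _ (by
          simp only [T, Finset.mem_insert, Finset.mem_image, Finset.mem_filter]
          exact Or.inr ⟨f, ⟨hf, hv⟩, rfl⟩)
        rwa [div_le_iff_of_neg hv] at this
      · rw [hv, mul_zero]
        exact h f (by simp [hf, hv])
      · have : T.max' hT ≤ f x / f (v a) := by
          apply Finset.max'_le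
          intro y hy
          simp only [T, Finset.mem_insert, Finset.mem_image, Finset.mem_filter] at hy
          rcases hy with rfl | ⟨g, ⟨hg, hgv⟩, rfl⟩
          · exact div_nonneg (h f (by simp [hf, hv.le])) hv.le
          · have := h (f (v a) • g - g (v a) • f) (by
              simp only [Finset.mem_union, Finset.mem_filter, Finset.mem_image,
                Finset.mem_product, Prod.exists]
              exact Or.inr ⟨f, g, ⟨⟨hf, hv⟩, hg, hgv⟩, rfl⟩)
            simp only [LinearMap.sub_apply, LinearMap.smul_apply, smul_eq_mul] at this
            rw [div_le_iff_of_neg hgv, div_mul_eq_mul_div, div_le_iff₀ hv]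
            linarith
        rwa [le_div_iff₀ hv] at this

/-- Polytopes are cut out by finitely many affine inequalities. -/
lemma polytope_hrep {E : Type*} [NormedAddCommGroup E] [NormedSpace ℝ E] [FiniteDimensional ℝ E]
    (P : Set E) (hP : IsPolytope P) :
    ∃ (n : ℕ) (l : Fin (n + 1) → StrongDual ℝ E) (b : Fin (n + 1) → ℝ),
      P = {x | ∀ i, l i x ≤ b i} := by
  classical
  obtain ⟨S, rfl⟩ := hP
  obtain ⟨L, hL⟩ := cone_hrep (fun s : E => ((s, 1) : E × ℝ)) S
  let e := L.equivFin
  let l0 : L → StrongDual ℝ E := fun f =>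
    LinearMap.toContinuousLinearMap (-((f : Module.Dual ℝ (E × ℝ)).comp (LinearMap.inl ℝ E ℝ)))
  let b0 : L → ℝ := fun f => (f : Module.Dual ℝ (E × ℝ)) (0, 1)
  refine ⟨L.card, Fin.cons 0 (fun i => l0 (e.symm i)), Fin.cons 0 (fun i => b0 (e.symm i)), ?_⟩
  ext x
  have h1 : x ∈ convexHull ℝ (S : Set E) ↔ ∀ f ∈ L, 0 ≤ f (x, 1) := by
    rw [← hL, Finset.mem_convexHull']
    refine exists_congr fun w => and_congr_right fun _ => ?_
    rw [Prod.ext_iff]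
    simp only [Prod.fst_sum, Prod.snd_sum, Prod.smul_fst, Prod.smul_snd, smul_eq_mul, mul_one]
    exact and_comm
  rw [h1, Set.mem_setOf_eq, Fin.forall_fin_succ]
  have h2 : ∀ f : L, (l0 f x ≤ b0 f ↔ 0 ≤ (f : Module.Dual ℝ (E × ℝ)) (x, 1)) := by
    intro f
    have : (f : Module.Dual ℝ (E × ℝ)) (x, 1) = (f : Module.Dual ℝ (E × ℝ)) (x, 0) +
      (f : Module.Dual ℝ (E × ℝ)) (0, 1) := by rw [← map_add]; simp
    rw [this]
    simp only [l0, b0, LinearMap.coe_toContinuousLinearMap', LinearMap.neg_apply,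
      LinearMap.comp_apply, LinearMap.inl_apply]
    constructor <;> intro h <;> linarith
  simp only [Fin.cons_zero, Fin.cons_succ, h2]
  constructor
  · intro h
    exact ⟨by simp, fun i => h _ (e.symm i).2⟩
  · rintro ⟨-, h⟩ f hf
    have := h (e ⟨f, hf⟩)
    simpa using this

/-- One radial projection away from a point `q` of `Q`. -/
lemma sdr_step {E : Type*} [NormedAddCommGroup E] [NormedSpace ℝ E] {n : ℕ}
    (l : Fin (n + 1) → StrongDual ℝ E) (b : Fin (n + 1) → ℝ) (P Q X : Set E)
    (hP : P = {x | ∀ i, l i x ≤ b i}) (hbd : Bornology.IsBounded P) (hQ : Convex ℝ Q)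
    (hXP : X ⊆ P)
    (hup : ∀ x ∈ X, ∀ y ∈ P, (∀ i, l i x = b i → l i y = b i) → y ∈ X)
    (q : E) (hqX : q ∈ X) (hqQ : q ∈ Q) :
    IsStrongDeformationRetract ({x ∈ X | ¬ ∀ i, l i x = b i → l i q = b i} \ Q) (X \ Q) := by
  have hPi : ∀ x ∈ P, ∀ i, l i x ≤ b i := by intro x hx; rw [hP] at hx; exact hx
  have hq := hPi q (hXP hqX)
  let g : E → ℝ := fun x =>
    Finset.univ.sup' Finset.univ_nonempty fun i => (l i x - l i q) / (b i - l i q)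
  have hgc : Continuous g := by
    apply Continuous.finset_sup'_apply
    intro i _
    exact ((l i).continuous.sub continuous_const).div_const _
  have hgle : ∀ x i, (l i x - l i q) / (b i - l i q) ≤ g x := fun x i =>
    Finset.le_sup' (fun i => (l i x - l i q) / (b i - l i q)) (Finset.mem_univ i)
  have hg1 : ∀ x ∈ P, g x ≤ 1 := by
    intro x hx
    apply Finset.sup'_le
    intro i _
    apply div_le_one_of_le₀
    · linarith [hPi x hx i]
    · linarith [hq i]
  have hbound : ∀ x ∈ P, ∀ i, l i x - l i q ≤ g x * (b i - l i q) := by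
    intro x hx i
    rcases (hq i).eq_or_lt with h | h
    · rw [h]; linarith [hPi x hx i]
    · rw [← div_le_iff₀ (by linarith)]
      exact hgle x i
  have hgpos : ∀ x ∈ P, x ≠ q → 0 < g x := by
    intro x hx hne
    by_contra hcon
    push Not at hcon
    have hmem : ∀ s : ℝ, 0 ≤ s → q + s • (x - q) ∈ P := by
      intro s hs
      rw [hP]
      intro i
      simp only [map_add, map_smul, map_sub, smul_eq_mul]
      have h1 := hbound x hx i
      have h2 := hq i
      have : l i x - l i q ≤ 0 := by nlinarith
      nlinarith
    obtain ⟨R, hR⟩ := hbd.exists_norm_le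
    have hn : 0 < ‖x - q‖ := norm_pos_iff.2 (sub_ne_zero.2 hne)
    have hR0 : ‖q‖ ≤ R := hR q (hXP hqX)
    have hR00 : 0 ≤ R := (norm_nonneg q).trans hR0
    have h1 := hR _ (hmem ((2 * R + 1) / ‖x - q‖) (by positivity))
    have h2 : ‖((2 * R + 1) / ‖x - q‖) • (x - q)‖ = 2 * R + 1 := by
      rw [norm_smul, Real.norm_of_nonneg (by positivity)]
      field_simp
    have h3 := norm_sub_le (q + ((2 * R + 1) / ‖x - q‖) • (x - q)) q
    rw [add_sub_cancel_left, h2] at h3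
    linarith
  have hgeq : ∀ x ∈ P, (g x = 1 ↔ ¬ ∀ i, l i x = b i → l i q = b i) := by
    intro x hx
    constructor
    · intro h hall
      obtain ⟨i, -, hi⟩ := Finset.exists_mem_eq_sup' (Finset.univ_nonempty (α := Fin (n + 1)))
        fun i => (l i x - l i q) / (b i - l i q)
      have hi' : (l i x - l i q) / (b i - l i q) = 1 := by rw [← h]; exact hi.symm
      have hne : b i - l i q ≠ 0 := by
        intro h0; rw [h0, div_zero] at hi'; exact zero_ne_one hi'
      rw [div_eq_one_iff_eq hne] at hi'
      exact hne (by rw [hall i (by linarith)]; ring)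
    · intro h
      push Not at h
      obtain ⟨i, hi, hne⟩ := h
      apply le_antisymm (hg1 x hx)
      have := hgle x i
      rw [hi, div_self] at this
      · exact this
      · exact sub_ne_zero.2 (Ne.symm hne)
  have hneq : ∀ x : E, x ∉ Q → x ≠ q := by rintro x hx rfl; exact hx hqQ
  let s : E → ℝ → ℝ := fun x t => (1 - t) + t / g x
  let h : E → ℝ → E := fun x t => q + s x t • (x - q)
  -- the points of the homotopy stay in `X \ Q`
  have hmemP : ∀ x ∈ X, x ∉ Q → ∀ t : ℝ, 0 ≤ t → t ≤ 1 →
      h x t ∈ X \ Q := by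
    intro x hx hxQ t ht0 ht1
    have hxP := hXP hx
    have hpos := hgpos x hxP (hneq x hxQ)
    have hle := hg1 x hxP
    have hs1 : 1 ≤ s x t := by
      have : t ≤ t / g x := by
        rw [le_div_iff₀ hpos]; nlinarith
      simp only [s]; linarith
    have hsg : s x t * g x ≤ 1 := by
      have : s x t * g x = (1 - t) * g x + t := by
        simp only [s]; field_simp
      rw [this]; nlinarith
    constructor
    · by_cases hact : ∀ i, l i x = b i → l i q = b i
      · apply hup x hx
        · rw [hP]
          intro i
          simp only [h, map_add, map_smul, map_sub, smul_eq_mul]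
          have h1 := hbound x hxP i
          have h2 := hq i
          have h3 : s x t * (l i x - l i q) ≤ s x t * (g x * (b i - l i q)) :=
            mul_le_mul_of_nonneg_left h1 (by linarith)
          have h4 : s x t * g x * (b i - l i q) ≤ 1 * (b i - l i q) :=
            mul_le_mul_of_nonneg_right hsg (by linarith)
          linarith
        · intro i hi
          simp only [h, map_add, map_smul, map_sub, smul_eq_mul, hi, hact i hi]
          ring
      · have hg := (hgeq x hxP).2 hact
        have : h x t = x := by simp [h, s, hg]
        rw [this]; exact hx
    · intro hhQ
      apply hxQ
      have hspos : 0 < s x t := by linarith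
      have := hQ.add_smul_sub_mem hqQ hhQ (t := (s x t)⁻¹)
        ⟨by positivity, inv_le_one_of_one_le₀ hs1⟩
      have he : q + (s x t)⁻¹ • (h x t - q) = x := by
        simp only [h, add_sub_cancel_left, smul_smul, inv_mul_cancel₀ hspos.ne', one_smul]
        abel
      rwa [he] at this
  refine ⟨fun x hx => ⟨hx.1.1, hx.2⟩,
    ⟨fun p => ⟨h p.1 p.2, hmemP _ p.1.2.1 p.1.2.2 _ p.2.2.1 p.2.2.2⟩, ?_⟩, ?_, ?_, ?_⟩
  · apply Continuous.subtype_mk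
    have hc1 : Continuous fun p : ↥(X \ Q) × ↥unitInterval => (p.1 : E) := by fun_prop
    have hc2 : Continuous fun p : ↥(X \ Q) × ↥unitInterval => (p.2 : ℝ) := by fun_prop
    have hc3 : Continuous fun p : ↥(X \ Q) × ↥unitInterval => (p.2 : ℝ) / g p.1 :=
      hc2.div (hgc.comp hc1) fun p => (hgpos _ (hXP p.1.2.1) (hneq _ p.1.2.2)).ne'
    exact continuous_const.add (((continuous_const.sub hc2).add hc3).smul
      (hc1.sub continuous_const))
  · intro x
    apply Subtype.ext
    simp [h, s]
  · intro x hx t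
    have hg := (hgeq x (hXP x.2.1)).2 hx.1.2
    apply Subtype.ext
    simp [h, s, hg]
  · intro x
    have hm := hmemP _ x.2.1 x.2.2 1 zero_le_one le_rfl
    refine ⟨⟨hm.1, ?_⟩, hm.2⟩
    refine (hgeq _ (hXP hm.1)).1 ?_
    have hpos := hgpos x (hXP x.2.1) (hneq x x.2.2)
    have hh : h x 1 = q + (g x)⁻¹ • ((x : E) - q) := by simp [h, s]
    change g (h x 1) = 1
    obtain ⟨i, -, hi⟩ := Finset.exists_mem_eq_sup' (Finset.univ_nonempty (α := Fin (n + 1)))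
      fun i => (l i x - l i q) / (b i - l i q)
    have hi' : (l i x - l i q) / (b i - l i q) = g x := hi.symm
    apply le_antisymm (hg1 _ (hXP hm.1))
    have h2 := hgle (h x 1) i
    rw [hh] at h2
    simp only [map_add, map_smul, map_sub, smul_eq_mul, add_sub_cancel_left] at h2
    rw [mul_div_assoc, hi', inv_mul_cancel₀ hpos.ne'] at h2
    rw [hh]; exact h2

/-- Iterating the radial projections. -/
lemma sdr_iter {E : Type*} [NormedAddCommGroup E] [NormedSpace ℝ E] {n : ℕ}
    (l : Fin (n + 1) → StrongDual ℝ E) (b : Fin (n + 1) → ℝ) (P Q : Set E)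
    (hP : P = {x | ∀ i, l i x ≤ b i}) (hbd : Bornology.IsBounded P) (hQ : Convex ℝ Q)
    (N : ℕ) (X : Set E) (hXP : X ⊆ P)
    (hup : ∀ x ∈ X, ∀ y ∈ P, (∀ i, l i x = b i → l i y = b i) → y ∈ X)
    (hN : (Set.image (fun x => {i | l i x = b i}) X).ncard ≤ N)
    (hA : {x ∈ P | ∀ y ∈ P ∩ Q, ¬ ∀ i, l i x = b i → l i y = b i} ⊆ X) :
    IsStrongDeformationRetract
      {x ∈ P | ∀ y ∈ P ∩ Q, ¬ ∀ i, l i x = b i → l i y = b i} (X \ Q) := by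
  induction N generalizing X with
  | zero =>
    have hXe : X = ∅ := by
      have := (Set.ncard_eq_zero (Set.toFinite _)).1 (Nat.le_zero.1 hN)
      simpa using this
    subst hXe
    have : {x ∈ P | ∀ y ∈ P ∩ Q, ¬ ∀ i, l i x = b i → l i y = b i} = ∅ \ Q := by
      rw [Set.empty_diff]; exact Set.subset_empty_iff.1 hA
    rw [this]; exact sdr_refl _
  | succ N ih =>
    by_cases hXQ : ∃ q, q ∈ X ∧ q ∈ Q
    · obtain ⟨q, hqX, hqQ⟩ := hXQ
      refine sdr_trans (ih {x ∈ X | ¬ ∀ i, l i x = b i → l i q = b i} ?_ ?_ ?_ ?_)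
        (sdr_step l b P Q X hP hbd hQ hXP hup q hqX hqQ)
      · exact fun x hx => hXP hx.1
      · rintro x ⟨hx, hxq⟩ y hy hxy
        exact ⟨hup x hx y hy hxy, fun h => hxq fun i hi => h i (hxy i hi)⟩
      · refine Nat.lt_succ_iff.1 (lt_of_lt_of_le (Set.ncard_lt_ncard ?_ (Set.toFinite _)) hN)
        refine ⟨Set.image_mono fun x hx => hx.1, fun hsub => ?_⟩
        obtain ⟨x, ⟨hx, hxq⟩, hxe⟩ := hsub ⟨q, hqX, rfl⟩
        apply hxq
        intro i hi
        have : i ∈ {i | l i x = b i} := hi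
        rw [show {i | l i x = b i} = {i | l i q = b i} from hxe] at this
        exact this
      · intro x hx
        exact ⟨hA hx, hx.2 q ⟨hXP hqX, hqQ⟩⟩
    · push Not at hXQ
      have : {x ∈ P | ∀ y ∈ P ∩ Q, ¬ ∀ i, l i x = b i → l i y = b i} = X \ Q := by
        ext x
        constructor
        · intro hx; exact ⟨hA hx, hXQ x (hA hx)⟩
        · rintro ⟨hx, -⟩
          exact ⟨hXP hx, fun y hy hxy => hXQ y (hup x hx y hy.1 hxy) hy.2⟩
      rw [this]; exact sdr_refl _

/-- The union of faces disjoint from `Q`, in terms of active constraints. -/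
lemma faces_eq {E : Type*} [NormedAddCommGroup E] [NormedSpace ℝ E] {n : ℕ}
    (l : Fin (n + 1) → StrongDual ℝ E) (b : Fin (n + 1) → ℝ) (P Q : Set E)
    (hP : P = {x | ∀ i, l i x ≤ b i}) :
    (⋃₀ {F : Set E | IsExposed ℝ P F ∧ F ∩ Q = ∅}) =
      {x ∈ P | ∀ y ∈ P ∩ Q, ¬ ∀ i, l i x = b i → l i y = b i} := by
  classical
  have hPi : ∀ x ∈ P, ∀ i, l i x ≤ b i := by intro x hx; rw [hP] at hx; exact hx
  ext x
  constructor
  · rintro ⟨F, ⟨hF, hFQ⟩, hx⟩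
    obtain ⟨f, hf⟩ := hF ⟨x, hx⟩
    have hx' := hx
    rw [hf] at hx'
    refine ⟨hx'.1, fun y hy hxy => ?_⟩
    have : y ∈ F ∩ Q := by
      refine ⟨?_, hy.2⟩
      rw [hf]
      -- move slightly from `x` away from `y`
      have hev : ∀ᶠ ε : ℝ in nhdsWithin 0 (Set.Ioi 0), ∀ i, l i (x + ε • (x - y)) ≤ b i := by
        rw [Filter.eventually_all]
        intro i
        rcases (hPi x hx'.1 i).eq_or_lt with h | h
        · refine Filter.Eventually.of_forall fun ε => ?_
          simp only [map_add, map_smul, map_sub, smul_eq_mul, h, hxy i h]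
          simp
        · have hc : Continuous fun ε : ℝ => l i (x + ε • (x - y)) := by fun_prop
          have ht : Filter.Tendsto (fun ε : ℝ => l i (x + ε • (x - y)))
              (nhdsWithin 0 (Set.Ioi 0)) (nhds (l i x)) := by
            have := hc.tendsto 0
            simp only [zero_smul, add_zero] at this
            exact this.mono_left nhdsWithin_le_nhds
          filter_upwards [ht.eventually (gt_mem_nhds h)] with ε hε using le_of_lt hε
      obtain ⟨ε, hε, hε0⟩ := (hev.and self_mem_nhdsWithin).exists
      have hε0' : 0 < ε := hε0
      have h1 := hx'.2 (x + ε • (x - y)) (by rw [hP]; exact hε)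
      simp only [map_add, map_smul, map_sub, smul_eq_mul] at h1
      have h2 : f x ≤ f y := by nlinarith
      exact ⟨hy.1, fun z hz => (hx'.2 z hz).trans h2⟩
    rw [hFQ] at this
    exact this
  · rintro ⟨hx, hxy⟩
    refine ⟨{y ∈ P | ∀ i, l i x = b i → l i y = b i}, ⟨fun _ => ?_, ?_⟩, hx, fun i hi => hi⟩
    · refine ⟨∑ i ∈ Finset.univ.filter (fun i => l i x = b i), l i, ?_⟩
      ext y
      simp only [Set.mem_setOf_eq, ContinuousLinearMap.sum_apply]
      refine and_congr_right fun hy => ⟨fun h z hz => ?_, fun h => ?_⟩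
      · refine Finset.sum_le_sum fun i hi => ?_
        rw [h i (Finset.mem_filter.1 hi).2]
        exact hPi z hz i
      · have h1 := h x hx
        have h2 : ∀ i ∈ Finset.univ.filter (fun i => l i x = b i), l i y ≤ l i x := by
          intro i hi
          rw [(Finset.mem_filter.1 hi).2]; exact hPi y hy i
        have h3 := (Finset.sum_eq_sum_iff_of_le h2).1 (le_antisymm (Finset.sum_le_sum h2) h1)
        intro i hi
        rw [h3 i (by simp [hi]), hi]
    · ext y
      simp only [Set.mem_inter_iff, Set.mem_setOf_eq, Set.mem_empty_iff_false, iff_false]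
      rintro ⟨⟨hy, hact⟩, hyQ⟩
      exact hxy y ⟨hy, hyQ⟩ hact

/-- For polytopes `P, Q ⊆ ℝ^d`, the union of the (exposed) faces of `P` disjoint from `Q`
is a strong deformation retract of `P \ Q`. -/
theorem statement3 {d : ℕ} (P Q : Set (EuclideanSpace ℝ (Fin d)))
    (hP : IsPolytope P) (hQ : IsPolytope Q) :
    IsStrongDeformationRetract
      (⋃₀ {F : Set (EuclideanSpace ℝ (Fin d)) | IsExposed ℝ P F ∧ F ∩ Q = ∅})
      (P \ Q) := by
  obtain ⟨n, l, b, hPl⟩ := polytope_hrep P hP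
  have hbd : Bornology.IsBounded P := by
    obtain ⟨S, rfl⟩ := hP
    exact isBounded_convexHull.2 S.finite_toSet.isBounded
  have hQc : Convex ℝ Q := by
    obtain ⟨S, rfl⟩ := hQ
    exact convex_convexHull ℝ _
  rw [faces_eq l b P Q hPl]
  exact sdr_iter l b P Q hPl hbd hQc _ P subset_rfl (fun _ _ y hy _ => hy) le_rfl
    (fun x hx => hx.1)
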